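/- Let I ⊆ ℝ be an open interval and A : I → gl(ℝ⁶) a differentiable curve with A(t) ∈ 𝔰𝔭(ℝ⁶) for all t, solving the bracket flow A′(t) = −(½ tr(S_{A(t)}²) + ¼ (tr(J A(t)))²)·A(t) + ½[A(t), [A(t), A(t)ᵗ]] + ½[A(t), S_{A(t)} ∘₆ S_{A(t)}]. Then for all t ∈ I: d/dt [ tr( (A(t) + A(t)ᵗ)² ) ] ≤ −⅛ ( tr( (A(t) + A(t)ᵗ)² ) )². -/

import Mathlib

open Matrix BigOperators

noncomputable section

abbrev M6 : Type := Matrix (Fin 6) (Fin 6) ℝ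
abbrev M7 : Type := Matrix (Fin 7) (Fin 7) ℝ

/-- The canonical almost complex structure `J` on `ℝ⁶`:
`Je₁ = e₂, Je₂ = −e₁, Je₃ = e₄, Je₄ = −e₃, Je₅ = e₆, Je₆ = −e₅` (0-based indices). -/
def J6 : M6 := Matrix.of fun i j =>
  if (i = 1 ∧ j = 0) ∨ (i = 3 ∧ j = 2) ∨ (i = 5 ∧ j = 4) then 1
  else if (i = 0 ∧ j = 1) ∨ (i = 2 ∧ j = 3) ∨ (i = 4 ∧ j = 5) then -1
  else 0

/-- `A ∈ 𝔰𝔭(ℝ⁶)` iff `AJ + JAᵗ = 0`. -/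
def inSp (A : M6) : Prop := A * J6 + J6 * Aᵀ = 0

/-- The symmetric part `S_A = ½(A + Aᵗ)`. -/
def symPart (A : M6) : M6 := (1/2 : ℝ) • (A + Aᵀ)

/-- Frobenius inner product `⟨X,Y⟩ = tr(XYᵗ)`. -/
def mdot {n : ℕ} (X Y : Matrix (Fin n) (Fin n) ℝ) : ℝ := (X * Yᵀ).trace

/-- Commutator `[X,Y] = XY − YX`. -/
def mcomm {n : ℕ} (X Y : Matrix (Fin n) (Fin n) ℝ) : Matrix (Fin n) (Fin n) ℝ := X * Y - Y * X

/-- Kronecker delta. -/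
def kdelta {n : ℕ} (x y : Fin n) : ℝ := if x = y then 1 else 0

/-- The totally antisymmetric 3-tensor `e^a ∧ e^b ∧ e^c` evaluated on `(e_i, e_j, e_k)`. -/
def alt3 {n : ℕ} (a b c i j k : Fin n) : ℝ :=
  Matrix.det !![kdelta a i, kdelta a j, kdelta a k;
                kdelta b i, kdelta b j, kdelta b k;
                kdelta c i, kdelta c j, kdelta c k]

/-- `ρ⁺ = e¹³⁵ − e¹⁴⁶ − e²⁴⁵ − e²³⁶` (here written with 0-based indices). -/
def rhoP (i j k : Fin 6) : ℝ :=
  alt3 0 2 4 i j k - alt3 0 3 5 i j k - alt3 1 3 4 i j k - alt3 1 2 5 i j k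

/-- `(h ∘₆ k)_{ab} = Σ_{m,n,p,q} h_{mn} k_{pq} ρ⁺_{mpa} ρ⁺_{nqb}`. -/
def circ6 (h k : M6) : M6 :=
  Matrix.of fun a b => ∑ m, ∑ n, ∑ p, ∑ q, h m n * k p q * rhoP m p a * rhoP n q b

/-- The bracket-flow vector field of the Laplacian coflow. -/
def Fflow (A : M6) : M6 :=
  (-((1/2 : ℝ) * (symPart A * symPart A).trace + (1/4 : ℝ) * ((J6 * A).trace)^2)) • A
  + (1/2 : ℝ) • mcomm A (mcomm A Aᵀ)
  + (1/2 : ℝ) • mcomm A (circ6 (symPart A) (symPart A))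

theorem aux_rho0 (g : Fin 6 → Fin 6 → ℝ) :
    ∑ m, ∑ p, rhoP m p 0 * g m p = g 2 4 - g 4 2 - g 3 5 + g 5 3 := by
  simp [Fin.sum_univ_six, rhoP, alt3, kdelta, Matrix.det_fin_three]; ring

theorem aux_rho1 (g : Fin 6 → Fin 6 → ℝ) :
    ∑ m, ∑ p, rhoP m p 1 * g m p = - g 3 4 + g 4 3 - g 2 5 + g 5 2 := by
  simp [Fin.sum_univ_six, rhoP, alt3, kdelta, Matrix.det_fin_three]; ring

theorem aux_rho2 (g : Fin 6 → Fin 6 → ℝ) :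
    ∑ m, ∑ p, rhoP m p 2 * g m p = g 4 0 - g 0 4 - g 5 1 + g 1 5 := by
  simp [Fin.sum_univ_six, rhoP, alt3, kdelta, Matrix.det_fin_three]; ring

theorem aux_rho3 (g : Fin 6 → Fin 6 → ℝ) :
    ∑ m, ∑ p, rhoP m p 3 * g m p = - g 5 0 + g 0 5 - g 4 1 + g 1 4 := by
  simp [Fin.sum_univ_six, rhoP, alt3, kdelta, Matrix.det_fin_three]; ring

theorem aux_rho4 (g : Fin 6 → Fin 6 → ℝ) :
    ∑ m, ∑ p, rhoP m p 4 * g m p = g 0 2 - g 2 0 - g 1 3 + g 3 1 := by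
  simp [Fin.sum_univ_six, rhoP, alt3, kdelta, Matrix.det_fin_three]; ring

theorem aux_rho5 (g : Fin 6 → Fin 6 → ℝ) :
    ∑ m, ∑ p, rhoP m p 5 * g m p = - g 0 3 + g 3 0 - g 1 2 + g 2 1 := by
  simp [Fin.sum_univ_six, rhoP, alt3, kdelta, Matrix.det_fin_three]; ring

theorem circ6_eq (h : M6) (a b : Fin 6) : circ6 h h a b =
    ∑ m, ∑ p, rhoP m p a * (∑ n, ∑ q, rhoP n q b * (h m n * h p q)) := by
  simp only [circ6, Matrix.of_apply, Finset.mul_sum]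
  refine Finset.sum_congr rfl fun m _ => ?_
  rw [Finset.sum_comm]
  refine Finset.sum_congr rfl fun p _ => Finset.sum_congr rfl fun n _ =>
    Finset.sum_congr rfl fun q _ => ?_
  ring

theorem sym_rel (A : M6) (hA : inSp A) : symPart A * J6 + J6 * symPart A = 0 := by
  have h1 : A * J6 + J6 * Aᵀ = 0 := hA
  have hJJ : J6 * J6 = -1 := by
    ext i j; fin_cases i <;> fin_cases j <;> simp [J6, Matrix.mul_apply, Fin.sum_univ_six]
  have h2 : J6 * A + Aᵀ * J6 = 0 := by
    have : J6 * A + Aᵀ * J6 = -(J6 * (A * J6 + J6 * Aᵀ) * J6) := by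
      have e : J6 * (A * J6 + J6 * Aᵀ) * J6 = J6 * A * (J6 * J6) + J6 * J6 * Aᵀ * J6 := by
        noncomm_ring
      rw [e, hJJ]; noncomm_ring
    rw [this, h1]; simp
  have : symPart A * J6 + J6 * symPart A
      = (1/2:ℝ) • ((A * J6 + J6 * Aᵀ) + (J6 * A + Aᵀ * J6)) := by
    simp only [symPart, Matrix.smul_mul, Matrix.mul_smul, ← smul_add]
    congr 1
    noncomm_ring
  rw [this, h1, h2]; simp

theorem circ_bound (h : M6) (hs : hᵀ = h) (hJ : h * J6 + J6 * h = 0) :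
    ∑ i, ∑ j, (circ6 h h i j)^2 ≤ 4 * ((h * h).trace)^2 := by
  have e : ∀ i j, h i j = h j i := fun i j => congrFun (congrFun hs j) i
  have k : ∀ i j, (h * J6 + J6 * h) i j = 0 := fun i j => by rw [hJ]; rfl
  have k00 := k 0 1
  have k01 := k 0 0
  have k20 := k 2 3
  have k21 := k 2 2
  have k40 := k 4 5
  have k41 := k 4 4
  have k1 := k 0 2
  have k2 := k 0 3
  have k3 := k 0 4
  have k4 := k 0 5
  have k5 := k 2 4
  have k6 := k 2 5
  clear k hJ hs
  simp [Matrix.add_apply, Matrix.mul_apply, Fin.sum_univ_six, J6] at k00 k01 k20 k21 k40 k41 k1 k2 k3 k4 k5 k6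
  have a10 := e 1 0
  have a20 := e 2 0
  have a21 := e 2 1
  have a30 := e 3 0
  have a31 := e 3 1
  have a32 := e 3 2
  have a40 := e 4 0
  have a41 := e 4 1
  have a42 := e 4 2
  have a43 := e 4 3
  have a50 := e 5 0
  have a51 := e 5 1
  have a52 := e 5 2
  have a53 := e 5 3
  have a54 := e 5 4
  clear e
  have b11 : h 1 1 = - h 0 0 := by linarith
  have b33 : h 3 3 = - h 2 2 := by linarith
  have b55 : h 5 5 = - h 4 4 := by linarith
  have b12 : h 1 2 = h 0 3 := by linarith
  have b13 : h 1 3 = -h 0 2 := by linarith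
  have b14 : h 1 4 = h 0 5 := by linarith
  have b15 : h 1 5 = -h 0 4 := by linarith
  have b34 : h 3 4 = h 2 5 := by linarith
  have b35 : h 3 5 = -h 2 4 := by linarith
  rw [b12] at a21
  rw [b13] at a31
  rw [b14] at a41
  rw [b15] at a51
  rw [b34] at a43
  rw [b35] at a53
  have key : ∑ i, ∑ j, (circ6 h h i j)^2 =
      4 * ((h * h).trace)^2 - 8 * ∑ i, ∑ j, ((h * h) i j)^2 := by
    simp only [Matrix.trace, Matrix.diag, Matrix.mul_apply, Fin.sum_univ_six]
    simp only [circ6_eq, aux_rho0, aux_rho1, aux_rho2, aux_rho3, aux_rho4, aux_rho5]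
    simp only [a10, a20, a21, a30, a31, a32, a40, a41, a42, a43, a50, a51, a52, a53, a54,
      b11, b33, b55, b12, b13, b14, b15, b34, b35]
    generalize h 0 0 = x1
    generalize h 0 1 = x2
    generalize h 0 2 = x3
    generalize h 0 3 = x4
    generalize h 0 4 = x5
    generalize h 0 5 = x6
    generalize h 2 2 = x7
    generalize h 2 3 = x8
    generalize h 2 4 = x9
    generalize h 2 5 = x10
    generalize h 4 4 = x11
    generalize h 4 5 = x12
    ring
  rw [key]
  have : 0 ≤ ∑ i, ∑ j, ((h * h) i j)^2 :=
    Finset.sum_nonneg fun i _ => Finset.sum_nonneg fun j _ => sq_nonneg _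
  linarith

theorem trace_main (A C : M6) (c : ℝ) :
    (symPart A * ((-c) • A + (1/2 : ℝ) • mcomm A (mcomm A Aᵀ) + (1/2 : ℝ) • mcomm A C)).trace
    = -c * (symPart A * symPart A).trace - (1/4) * (mcomm A Aᵀ * mcomm A Aᵀ).trace
      - (1/4) * (mcomm A Aᵀ * C).trace := by
  have h1 : (symPart A * A).trace = (symPart A * symPart A).trace := by
    have : (Aᵀ * Aᵀ).trace = (A * A).trace := by
      rw [← Matrix.transpose_mul, Matrix.trace_transpose]
    have h' : (A * Aᵀ).trace = (Aᵀ * A).trace := Matrix.trace_mul_comm _ _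
    simp only [symPart, Matrix.smul_mul, Matrix.mul_smul, Matrix.trace_smul, Matrix.add_mul,
      Matrix.mul_add, Matrix.trace_add, smul_eq_mul]
    linarith
  have h2 : ∀ X : M6, (symPart A * mcomm A X).trace = -(1/2) * (mcomm A Aᵀ * X).trace := by
    intro X
    have e1 : (A * (X * A)).trace = (A * A * X).trace := by
      rw [Matrix.trace_mul_comm, Matrix.mul_assoc, Matrix.trace_mul_comm]
    have e2 : (Aᵀ * (X * A)).trace = (A * Aᵀ * X).trace := by
      rw [← Matrix.mul_assoc, Matrix.trace_mul_comm, Matrix.mul_assoc]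
    simp only [symPart, mcomm, Matrix.smul_mul, Matrix.trace_smul, Matrix.add_mul,
      Matrix.mul_sub, Matrix.sub_mul, Matrix.trace_add, Matrix.trace_sub, smul_eq_mul, e1, e2,
      ← Matrix.mul_assoc]
    rw [Matrix.mul_assoc A X A, Matrix.mul_assoc Aᵀ X A, e1, e2]
    ring
  simp only [Matrix.mul_add, Matrix.mul_smul, Matrix.trace_add, Matrix.trace_smul, smul_eq_mul,
    h1, h2]
  ring

theorem trace_sq (M C : M6) (hM : Mᵀ = M) :
    0 ≤ (M * M).trace + (M * C).trace + (1/4) * ∑ i, ∑ j, (C i j)^2 := by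
  have e : ∀ i j, M i j = M j i := fun i j => congrFun (congrFun hM j) i
  have : (M * M).trace + (M * C).trace + (1/4) * ∑ i, ∑ j, (C i j)^2
      = ∑ i, ∑ j, (M i j + C i j / 2)^2 := by
    rw [Matrix.trace_mul_comm M C]
    simp only [Matrix.trace, Matrix.diag, Matrix.mul_apply, Finset.mul_sum,
      ← Finset.sum_add_distrib]
    refine Finset.sum_congr rfl fun i _ => Finset.sum_congr rfl fun j _ => ?_
    rw [e j i]; ring
  rw [this]
  exact Finset.sum_nonneg fun i _ => Finset.sum_nonneg fun j _ => sq_nonneg _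

/-- Along any bracket flow solution in `𝔰𝔭(ℝ⁶)` on an open interval,
`d/dt tr((A + Aᵗ)²) ≤ −⅛ (tr((A + Aᵗ)²))²`. -/
theorem scalar_curvature_evolution (a b : ℝ) (A : ℝ → M6)
    (hsp : ∀ t ∈ Set.Ioo a b, inSp (A t))
    (hflow : ∀ t ∈ Set.Ioo a b, ∀ i j, HasDerivAt (fun s => A s i j) (Fflow (A t) i j) t) :
    ∀ t ∈ Set.Ioo a b, ∃ r : ℝ,
      HasDerivAt (fun s => ((A s + (A s)ᵀ) * (A s + (A s)ᵀ)).trace) r t ∧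
      r ≤ -(1/8) * (((A t + (A t)ᵀ) * (A t + (A t)ᵀ)).trace)^2 := by
  intro t ht
  have hd := hflow t ht
  have hA := hsp t ht
  have hSJ := sym_rel _ hA
  have hsym : (symPart (A t))ᵀ = symPart (A t) := by
    simp [symPart, add_comm]
  have hb := circ_bound _ hsym hSJ
  have hM : (mcomm (A t) (A t)ᵀ)ᵀ = mcomm (A t) (A t)ᵀ := by
    simp [mcomm]
  have hq := trace_sq _ (circ6 (symPart (A t)) (symPart (A t))) hM
  have hm := trace_main (A t) (circ6 (symPart (A t)) (symPart (A t)))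
    ((1/2 : ℝ) * (symPart (A t) * symPart (A t)).trace + (1/4 : ℝ) * ((J6 * A t).trace)^2)
  have hS : A t + (A t)ᵀ = (2:ℝ) • symPart (A t) := by
    simp [symPart, smul_smul]
  have hs0 : 0 ≤ (symPart (A t) * symPart (A t)).trace := by
    have e : ∀ i j, symPart (A t) i j = symPart (A t) j i :=
      fun i j => congrFun (congrFun hsym j) i
    simp only [Matrix.trace, Matrix.diag, Matrix.mul_apply]
    refine Finset.sum_nonneg fun i _ => Finset.sum_nonneg fun j _ => ?_
    rw [e j i]; exact mul_self_nonneg _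
  refine ⟨8 * (symPart (A t) * Fflow (A t)).trace, ?_, ?_⟩
  · have : 8 * (symPart (A t) * Fflow (A t)).trace = ∑ i, ∑ j,
        ((Fflow (A t) i j + Fflow (A t) j i) * (A t j i + A t i j)
          + (A t i j + A t j i) * (Fflow (A t) j i + Fflow (A t) i j)) := by
      have e1 : 8 * (symPart (A t) * Fflow (A t)).trace
          = ∑ i, ∑ j, (A t i j + A t j i) * (4 * Fflow (A t) j i) := by
        simp only [Matrix.trace, Matrix.diag, Matrix.mul_apply, Finset.mul_sum, symPart,
          Matrix.smul_apply, Matrix.add_apply, Matrix.transpose_apply, smul_eq_mul]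
        refine Finset.sum_congr rfl fun i _ => Finset.sum_congr rfl fun j _ => ?_
        ring
      have e2 : ∑ i, ∑ j, (A t i j + A t j i) * (4 * Fflow (A t) j i)
          = ∑ i, ∑ j, (A t j i + A t i j) * (4 * Fflow (A t) i j) := Finset.sum_comm
      have e3 : 2 * ∑ i, ∑ j, ((Fflow (A t) i j + Fflow (A t) j i) * (A t j i + A t i j)
          + (A t i j + A t j i) * (Fflow (A t) j i + Fflow (A t) i j))
          = ∑ i, ∑ j, (A t i j + A t j i) * (4 * Fflow (A t) j i)
          + ∑ i, ∑ j, (A t j i + A t i j) * (4 * Fflow (A t) i j) := by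
        simp only [Finset.mul_sum, ← Finset.sum_add_distrib]
        refine Finset.sum_congr rfl fun i _ => Finset.sum_congr rfl fun j _ => ?_
        ring
      linarith
    rw [this]
    simp only [Matrix.trace, Matrix.diag, Matrix.mul_apply, Matrix.add_apply,
      Matrix.transpose_apply]
    refine HasDerivAt.fun_sum fun i _ => HasDerivAt.fun_sum fun j _ => ?_
    exact ((hd i j).fun_add (hd j i)).fun_mul ((hd j i).fun_add (hd i j))
  · rw [hS]
    simp only [Fflow, hm, Matrix.smul_mul, Matrix.mul_smul, Matrix.trace_smul, smul_eq_mul]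
    have : 0 ≤ ((J6 * A t).trace)^2 * (symPart (A t) * symPart (A t)).trace :=
      mul_nonneg (sq_nonneg _) hs0
    nlinarith
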